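/- For every natural number r, the Riesz functional of y applied to the polynomial (x1^2 + x2^2)^r * (-2 + x1 + x2)^2 equals 4*(1 - √2), the same value as L_y applied to (-2 + x1 + x2)^2. -/

import Mathlib

/-!
With `s = 1 / √2`, the number `momSeq a b` is half the signed sum of the monomial `x₁ ^ a * x₂ ^ b`
over the four points `(±s, ±s)`, where `(-s, -s)` has sign `-1` and the other three have sign `+1`.
So `riesz` is integration against a signed atomic measure supported on the unit circle
(`riesz_eq_eval`), where `x₁ ^ 2 + x₂ ^ 2 = 1`: multiplying by powers of this form changes nothing,
and the value is a four-term computation.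
-/

/-- The moment sequence from the counterexample. -/
noncomputable def momSeq (a1 a2 : ℕ) : ℝ :=
  (1 + (-1 : ℝ)^a1 + (-1 : ℝ)^a2 - (-1 : ℝ)^(a1+a2)) / (2 * Real.sqrt (2^(a1+a2)))

/-- The Riesz functional associated to the moment sequence. -/
noncomputable def riesz (p : MvPolynomial (Fin 2) ℝ) : ℝ :=
  ∑ α ∈ p.support, MvPolynomial.coeff α p * momSeq (α 0) (α 1)

/-- The moment sequence consists of the moments of a signed measure with four atoms. -/
lemma momSeq_eq (a b : ℕ) : momSeq a b =
    ((√2)⁻¹ ^ a * (√2)⁻¹ ^ b + (-(√2)⁻¹) ^ a * (√2)⁻¹ ^ b + (√2)⁻¹ ^ a * (-(√2)⁻¹) ^ b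
      - (-(√2)⁻¹) ^ a * (-(√2)⁻¹) ^ b) / 2 := by
  have h : √((2 : ℝ) ^ (a + b)) = √2 ^ (a + b) := by
    rw [Real.sqrt_eq_iff_mul_self_eq (by positivity) (by positivity), ← mul_pow,
      Real.mul_self_sqrt (by norm_num)]
  have h0 : √(2 : ℝ) ≠ 0 := by positivity
  rw [momSeq, h, neg_pow (√2)⁻¹ a, neg_pow (√2)⁻¹ b, inv_pow, inv_pow, pow_add,
    pow_add]
  field_simp

lemma riesz_eq_eval (p : MvPolynomial (Fin 2) ℝ) : riesz p =
    (MvPolynomial.eval ![(√2)⁻¹, (√2)⁻¹] p + MvPolynomial.eval ![-(√2)⁻¹, (√2)⁻¹] p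
      + MvPolynomial.eval ![(√2)⁻¹, -(√2)⁻¹] p - MvPolynomial.eval ![-(√2)⁻¹, -(√2)⁻¹] p) / 2 := by
  simp only [riesz, MvPolynomial.eval_eq', Fin.prod_univ_two, Matrix.cons_val_zero,
    Matrix.cons_val_one, ← Finset.sum_add_distrib, ← Finset.sum_sub_distrib, Finset.sum_div,
    momSeq_eq]
  refine Finset.sum_congr rfl fun α _ => ?_
  ring

theorem stmt_15 : ∀ r : ℕ,
    riesz (((MvPolynomial.X 0)^2 + (MvPolynomial.X 1)^2)^r *
      (MvPolynomial.C (-2) + MvPolynomial.X 0 + MvPolynomial.X 1)^2) = 4*(1 - Real.sqrt 2) ∧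
    riesz (((MvPolynomial.X 0)^2 + (MvPolynomial.X 1)^2)^r *
      (MvPolynomial.C (-2) + MvPolynomial.X 0 + MvPolynomial.X 1)^2) =
      riesz ((MvPolynomial.C (-2) + MvPolynomial.X 0 + MvPolynomial.X 1)^2) := by
  have key : ∀ r : ℕ, riesz (((MvPolynomial.X 0)^2 + (MvPolynomial.X 1)^2)^r *
      (MvPolynomial.C (-2) + MvPolynomial.X 0 + MvPolynomial.X 1)^2) = 4*(1 - Real.sqrt 2) := by
    intro r
    have hs : (√2 : ℝ)⁻¹ ^ 2 + (√2)⁻¹ ^ 2 = 1 := by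
      rw [inv_pow, Real.sq_sqrt (by norm_num)]; norm_num
    have h2 : (√2 : ℝ)⁻¹ = √2 / 2 := by
      rw [inv_eq_one_div, div_eq_div_iff (by positivity) (by norm_num),
        Real.mul_self_sqrt (by norm_num), one_mul]
    simp only [riesz_eq_eval, map_mul, map_pow, map_add, MvPolynomial.eval_X, MvPolynomial.eval_C,
      Matrix.cons_val_zero, Matrix.cons_val_one, neg_sq, hs, one_pow, one_mul]
    rw [h2]
    ring
  intro r
  refine ⟨key r, (key r).trans ?_⟩
  simpa only [pow_zero, one_mul] using (key 0).symm
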